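/- (Weighted Hardy inequality on exterior slices) Let \beta > -1 and let t\ge 2. For any smooth compactly supported function u on \Sigma^e_t = \{x\in\mathbb{R}^3 : |x|\ge \sqrt{(t-1)^2-1}\}\times S^1, \int_{\Sigma^e_t} (2+|x|-t)^{\beta} u^2\, dx\,dy \le C \int_{\Sigma^e_t} (2+|x|-t)^{\beta+2} |\nabla u|^2\, dx\,dy, with C depending only on \beta. -/

import Mathlib

open Real MeasureTheory

namespace Stmt3

/-- Squared full spatial gradient (in `x ∈ ℝ³` and `y ∈ S¹`). -/
noncomputable def grad2 (u : EuclideanSpace ℝ (Fin 3) × ℝ → ℝ)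
    (p : EuclideanSpace ℝ (Fin 3) × ℝ) : ℝ :=
  (∑ i : Fin 3, (fderiv ℝ u p (EuclideanSpace.single i 1, 0)) ^ 2) +
    (fderiv ℝ u p (0, 1)) ^ 2

/-- The exterior slice `Σ^e_t = {|x| ≥ √((t-1)²-1)} × S¹`, with the circle realized as
the period cell `[0, 2π]` of a `2π`-periodic variable. -/
def slice (t : ℝ) : Set (EuclideanSpace ℝ (Fin 3) × ℝ) :=
  {p | Real.sqrt ((t - 1) ^ 2 - 1) ≤ ‖p.1‖ ∧ p.2 ∈ Set.Icc 0 (2 * π)}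

abbrev E3 := EuclideanSpace ℝ (Fin 3)

/-- Integration in polar coordinates for nonnegative functions on `ℝ³`. -/
lemma lintegral_polar (G : E3 → ENNReal) (hG : Measurable G) :
    ∫⁻ x, G x = ∫⁻ ω : Metric.sphere (0 : E3) 1, (∫⁻ r in Set.Ioi (0 : ℝ),
      ENNReal.ofReal (r ^ 2) * G (r • (ω : E3))) ∂((volume : Measure E3).toSphere) := by
  have hmp := (volume : Measure E3).measurePreserving_homeomorphUnitSphereProd
  have hm : Measurable (fun p : Metric.sphere (0 : E3) 1 × Set.Ioi (0 : ℝ) =>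
      G ((p.2 : ℝ) • (p.1 : E3))) := by
    apply hG.comp
    fun_prop
  have hdim : Module.finrank ℝ E3 - 1 = 2 := by simp
  rw [hdim] at hmp
  calc ∫⁻ x, G x = ∫⁻ x in ({0}ᶜ : Set E3), G x := by
        rw [restrict_compl_singleton]
    _ = ∫⁻ x : ({0}ᶜ : Set E3), G x ∂((volume : Measure E3).comap (↑)) := by
        rw [lintegral_subtype_comap (measurableSet_singleton _).compl]
    _ = ∫⁻ p, G ((p.2 : ℝ) • (p.1 : E3))
          ∂((volume : Measure E3).toSphere.prod (Measure.volumeIoiPow 2)) := by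
        rw [← hmp.lintegral_comp hm]
        apply lintegral_congr
        intro x
        congr 1
        have := (homeomorphUnitSphereProd E3).symm_apply_apply x
        conv_lhs => rw [← this]
        simp only [homeomorphUnitSphereProd_symm_apply_coe]
    _ = _ := by
        rw [lintegral_prod _ hm.aemeasurable]
        apply lintegral_congr
        intro ω
        have hm1 : Measurable (fun r : ℝ => G (r • (ω : E3))) := by
          apply hG.comp
          fun_prop
        rw [Measure.volumeIoiPow, lintegral_withDensity_eq_lintegral_mul]
        · simp only [Pi.mul_apply]
          exact lintegral_subtype_comap measurableSet_Ioi
            (fun r : ℝ => ENNReal.ofReal (r ^ 2) * G (r • (ω : E3)))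
        · fun_prop
        · exact hm1.comp measurable_subtype_coe

/-- The one-dimensional weighted Hardy inequality. -/
lemma hardy_interval (β : ℝ) (hβ : -1 < β) (a b t : ℝ) (ha : 0 ≤ a) (hat : 0 ≤ 2 + a - t)
    (hab : a ≤ b) (f f' : ℝ → ℝ) (hf : ∀ r, HasDerivAt f (f' r) r) (hf' : Continuous f')
    (hb : f b = 0) :
    IntervalIntegrable (fun r => (2 + r - t) ^ β * (r ^ 2 * f r ^ 2)) volume a b ∧
    IntervalIntegrable (fun r => (2 + r - t) ^ (β + 2) * (r ^ 2 * f' r ^ 2)) volume a b ∧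
    ∫ r in a..b, (2 + r - t) ^ β * (r ^ 2 * f r ^ 2) ≤
      4 / (β + 1) ^ 2 * ∫ r in a..b, (2 + r - t) ^ (β + 2) * (r ^ 2 * f' r ^ 2) := by
  have hfc : Continuous f := continuous_iff_continuousAt.2 fun r => (hf r).continuousAt
  have hk : 0 < β + 1 := by linarith
  have hw : IntervalIntegrable (fun r : ℝ => (2 + r - t) ^ β) volume a b := by
    have h := (intervalIntegral.intervalIntegrable_rpow' (a := a + (2 - t)) (b := b + (2 - t))
      hβ).comp_add_right (2 - t)
    simp only [add_sub_cancel_right] at h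
    refine h.congr ?_
    intro r _
    simp only
    congr 1
    ring
  have c1 : Continuous (fun r : ℝ => (2 + r - t) ^ (β + 1)) :=
    Continuous.rpow_const (by fun_prop) (fun _ => Or.inr hk.le)
  have c2 : Continuous (fun r : ℝ => (2 + r - t) ^ (β + 2)) :=
    Continuous.rpow_const (by fun_prop) (fun _ => Or.inr (by linarith))
  have i1 : IntervalIntegrable (fun r => (2 + r - t) ^ β * (r ^ 2 * f r ^ 2)) volume a b :=
    hw.mul_continuousOn (by fun_prop)
  have i2 : IntervalIntegrable (fun r => (2 + r - t) ^ (β + 2) * (r ^ 2 * f' r ^ 2)) volume a b :=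
    Continuous.intervalIntegrable (by fun_prop) _ _
  have i3 : IntervalIntegrable (fun r => (2 + r - t) ^ (β + 1) *
      (2 * r * f r ^ 2 + r ^ 2 * (2 * f r * f' r))) volume a b :=
    Continuous.intervalIntegrable (by fun_prop) _ _
  refine ⟨i1, i2, ?_⟩
  have iF : IntervalIntegrable (fun r => (β + 1) * ((2 + r - t) ^ β * (r ^ 2 * f r ^ 2)) +
      (2 + r - t) ^ (β + 1) *
      (2 * r * f r ^ 2 + r ^ 2 * (2 * f r * f' r))) volume a b := (i1.const_mul _).add i3
  have ftc := intervalIntegral.integral_eq_sub_of_hasDerivAt_of_le hab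
    (f := fun r => (2 + r - t) ^ (β + 1) * (r ^ 2 * f r ^ 2)) (by fun_prop) (fun r hr => by
      have hpos : 0 < 2 + r - t := by linarith [hr.1]
      have h1 : HasDerivAt (fun r : ℝ => 2 + r - t) 1 r :=
        ((hasDerivAt_id r).const_add 2).sub_const t
      have h2 := h1.rpow_const (p := β + 1) (Or.inl hpos.ne')
      have h3 := ((hasDerivAt_id r).pow 2).mul ((hf r).pow 2)
      refine (h2.mul h3).congr_deriv (g' := (β + 1) * ((2 + r - t) ^ β * (r ^ 2 * f r ^ 2)) +
      (2 + r - t) ^ (β + 1) *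
      (2 * r * f r ^ 2 + r ^ 2 * (2 * f r * f' r))) ?_
      simp
      ring) iF
  have hmono : ∫ r in a..b, ((β + 1) / 2 * ((2 + r - t) ^ β * (r ^ 2 * f r ^ 2)) -
      2 / (β + 1) * ((2 + r - t) ^ (β + 2) * (r ^ 2 * f' r ^ 2))) ≤
      ∫ r in a..b, ((β + 1) * ((2 + r - t) ^ β * (r ^ 2 * f r ^ 2)) +
      (2 + r - t) ^ (β + 1) *
      (2 * r * f r ^ 2 + r ^ 2 * (2 * f r * f' r))) := by
    refine intervalIntegral.integral_mono_on_of_le_Ioo hab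
      ((i1.const_mul _).sub (i2.const_mul _)) iF ?_
    intro r hr
    have hpos : 0 < 2 + r - t := by linarith [hr.1]
    have hr0 : 0 < r := by linarith [hr.1]
    generalize hwd : 2 + r - t = w at *
    have e1 : w ^ (β + 1) = w ^ β * w := by rw [Real.rpow_add hpos, Real.rpow_one]
    have e2 : w ^ (β + 2) = w ^ β * w ^ 2 := by
      rw [Real.rpow_add hpos]
      norm_num
    rw [e1, e2]
    have hp : 0 < w ^ β := Real.rpow_pos_of_pos hpos _
    have key : 0 ≤ w ^ β * r ^ 2 * ((β + 1) / 2) * (f r + 2 / (β + 1) * w * f' r) ^ 2 +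
      2 * w ^ β * w * r * f r ^ 2 := by positivity
    have : (β + 1) * (w ^ β * (r ^ 2 * f r ^ 2)) +
        w ^ β * w * (2 * r * f r ^ 2 + r ^ 2 * (2 * f r * f' r)) -
        ((β + 1) / 2 * (w ^ β * (r ^ 2 * f r ^ 2)) -
          2 / (β + 1) * (w ^ β * w ^ 2 * (r ^ 2 * f' r ^ 2))) =
        w ^ β * r ^ 2 * ((β + 1) / 2) * (f r + 2 / (β + 1) * w * f' r) ^ 2 +
      2 * w ^ β * w * r * f r ^ 2 := by
      field_simp
      ring
    linarith
  rw [ftc, intervalIntegral.integral_sub (i1.const_mul _) (i2.const_mul _),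
    intervalIntegral.integral_const_mul, intervalIntegral.integral_const_mul, hb] at hmono
  have hFa : 0 ≤ (2 + a - t) ^ (β + 1) * (a ^ 2 * f a ^ 2) := by
    have := Real.rpow_nonneg hat (β + 1)
    positivity
  generalize (∫ r in a..b, (2 + r - t) ^ β * (r ^ 2 * f r ^ 2)) = X at *
  generalize (∫ r in a..b, (2 + r - t) ^ (β + 2) * (r ^ 2 * f' r ^ 2)) = Y at *
  have h : (β + 1) / 2 * X ≤ 2 / (β + 1) * Y := by
    have : (2 + b - t) ^ (β + 1) * (b ^ 2 * (0:ℝ) ^ 2) = 0 := by ring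
    linarith
  calc X = 2 / (β + 1) * ((β + 1) / 2 * X) := by field_simp
    _ ≤ 2 / (β + 1) * (2 / (β + 1) * Y) := by gcongr
    _ = _ := by field_simp; ring

lemma hardy_line (β : ℝ) (hβ : -1 < β) (a R t : ℝ) (ha : 0 ≤ a) (hat : 0 ≤ 2 + a - t)
    (f f' : ℝ → ℝ) (hf : ∀ r, HasDerivAt f (f' r) r) (hf' : Continuous f')
    (hR : ∀ r, 0 ≤ r → R ≤ r → f r = 0) :
    ∫⁻ r in Set.Ioi a, ENNReal.ofReal ((2 + r - t) ^ β * (r ^ 2 * f r ^ 2)) ≤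
      ENNReal.ofReal (4 / (β + 1) ^ 2) *
        ∫⁻ r in Set.Ioi a, ENNReal.ofReal ((2 + r - t) ^ (β + 2) * (r ^ 2 * f' r ^ 2)) := by
  set b := max a R with hbdef
  have hab : a ≤ b := le_max_left _ _
  obtain ⟨i1, i2, h⟩ := hardy_interval β hβ a b t ha hat hab f f' hf hf'
    (hR b (ha.trans hab) (le_max_right _ _))
  have hun : Set.Ioi a = Set.Ioc a b ∪ Set.Ioi b := (Set.Ioc_union_Ioi_eq_Ioi hab).symm
  have hL : ∫⁻ r in Set.Ioi a, ENNReal.ofReal ((2 + r - t) ^ β * (r ^ 2 * f r ^ 2)) =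
      ∫⁻ r in Set.Ioc a b, ENNReal.ofReal ((2 + r - t) ^ β * (r ^ 2 * f r ^ 2)) := by
    rw [hun, lintegral_union measurableSet_Ioi
      (Set.disjoint_left.2 fun x hx hx' => absurd hx.2 (not_le.2 hx'))]
    have : ∫⁻ r in Set.Ioi b, ENNReal.ofReal ((2 + r - t) ^ β * (r ^ 2 * f r ^ 2)) = 0 := by
      rw [setLIntegral_congr_fun (g := fun _ => 0) measurableSet_Ioi]
      · simp
      · intro r hr
        have hr' : b < r := hr
        simp [hR r (by linarith) ((le_max_right a R).trans hr'.le)]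
    rw [this, add_zero]
  have hnn : ∀ (γ : ℝ) (g : ℝ → ℝ), 0 ≤ᵐ[volume.restrict (Set.Ioc a b)]
      fun r => (2 + r - t) ^ γ * (r ^ 2 * g r ^ 2) := by
    intro γ g
    filter_upwards [ae_restrict_mem measurableSet_Ioc] with r hr
    have : 0 ≤ 2 + r - t := by linarith [hr.1]
    have := Real.rpow_nonneg this γ
    simp only [Pi.zero_apply]
    positivity
  rw [hL]
  refine le_trans ?_ (mul_le_mul_right (lintegral_mono_set (Set.Ioc_subset_Ioi_self : Set.Ioc a b ⊆ Set.Ioi a)) _)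
  rw [← ofReal_integral_eq_lintegral_ofReal i1.1 (hnn _ _),
    ← ofReal_integral_eq_lintegral_ofReal i2.1 (hnn _ _), ← ENNReal.ofReal_mul (by positivity)]
  apply ENNReal.ofReal_le_ofReal
  rwa [intervalIntegral.integral_of_le hab, intervalIntegral.integral_of_le hab] at h

lemma grad_bound (u : E3 × ℝ → ℝ) (p : E3 × ℝ) (ω : E3) (hω : ‖ω‖ = 1) :
    (fderiv ℝ u p (ω, 0)) ^ 2 ≤ grad2 u p := by
  have h1 : fderiv ℝ u p (ω, 0) =
      ∑ i : Fin 3, ω i * fderiv ℝ u p (EuclideanSpace.single i 1, 0) := by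
    have : (ω, (0:ℝ)) = ∑ i : Fin 3, ω i • ((EuclideanSpace.single i 1, 0) : E3 × ℝ) := by
      ext i
      · fin_cases i <;> simp [Fin.sum_univ_three]
      · simp [Fin.sum_univ_three]
    rw [this, map_sum]
    simp only [map_smul, smul_eq_mul]
  have h2 : ∑ i : Fin 3, ω i ^ 2 = 1 := by
    have := EuclideanSpace.real_norm_sq_eq ω
    rw [← this, hω]
    norm_num
  have h3 := Finset.sum_mul_sq_le_sq_mul_sq Finset.univ (fun i => ω i)
    (fun i => fderiv ℝ u p (EuclideanSpace.single i 1, 0))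
  rw [h1, grad2]
  rw [h2, one_mul] at h3
  nlinarith [sq_nonneg (fderiv ℝ u p (0, 1))]

lemma hardy_ray (β : ℝ) (hβ : -1 < β) (a R t : ℝ) (ha : 0 ≤ a) (hat : 0 ≤ 2 + a - t)
    (u : E3 × ℝ → ℝ) (hu : ContDiff ℝ (⊤ : ℕ∞) u) (hR : ∀ x y, R ≤ ‖x‖ → u (x, y) = 0)
    (y : ℝ) (ω : E3) (hω : ‖ω‖ = 1) :
    ∫⁻ r in Set.Ioi (0 : ℝ), ENNReal.ofReal (r ^ 2) * ({x : E3 | a ≤ ‖x‖}.indicator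
      (fun x => ENNReal.ofReal ((2 + ‖x‖ - t) ^ β * u (x, y) ^ 2)) (r • ω)) ≤
    ENNReal.ofReal (4 / (β + 1) ^ 2) * ∫⁻ r in Set.Ioi (0 : ℝ),
      ENNReal.ofReal (r ^ 2) * ({x : E3 | a ≤ ‖x‖}.indicator
      (fun x => ENNReal.ofReal ((2 + ‖x‖ - t) ^ (β + 2) * grad2 u (x, y))) (r • ω)) := by
  have hset : (Set.Ici a ∩ Set.Ioi 0 : Set ℝ) =ᵐ[volume] Set.Ioi a := by
    rcases ha.eq_or_lt with h | h
    · have e : (Set.Ici a ∩ Set.Ioi 0 : Set ℝ) = Set.Ioi a := by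
        rw [← h, Set.inter_eq_self_of_subset_right Set.Ioi_subset_Ici_self]
      rw [e]
      exact Filter.EventuallyEq.rfl
    · have e : (Set.Ici a ∩ Set.Ioi 0 : Set ℝ) = Set.Ici a :=
        Set.inter_eq_self_of_subset_left (Set.Ici_subset_Ioi.2 h)
      rw [e]
      exact Ioi_ae_eq_Ici.symm
  have conv : ∀ g : E3 → ℝ,
      ∫⁻ r in Set.Ioi (0 : ℝ), ENNReal.ofReal (r ^ 2) * ({x : E3 | a ≤ ‖x‖}.indicator
        (fun x => ENNReal.ofReal (g x)) (r • ω)) =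
      ∫⁻ r in Set.Ioi a, ENNReal.ofReal (r ^ 2 * g (r • ω)) := by
    intro g
    rw [← setLIntegral_congr hset, ← Measure.restrict_restrict measurableSet_Ici,
      ← lintegral_indicator measurableSet_Ici]
    apply setLIntegral_congr_fun measurableSet_Ioi
    intro r hr
    have hr0 : 0 < r := hr
    have hn : ‖r • ω‖ = r := by rw [norm_smul, hω, mul_one, Real.norm_of_nonneg hr0.le]
    by_cases h : a ≤ r
    · simp [Set.indicator, hn, h, ENNReal.ofReal_mul (sq_nonneg r)]
    · simp [Set.indicator, hn, h]
  rw [conv, conv]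
  have hd : Differentiable ℝ u := hu.differentiable (by simp)
  have hc : Continuous (fderiv ℝ u) := hu.continuous_fderiv (by simp)
  have key := hardy_line β hβ a R t ha hat (fun r => u (r • ω, y))
    (fun r => fderiv ℝ u (r • ω, y) (ω, 0)) (fun r => by
      have h1 : HasDerivAt (fun r : ℝ => (r • ω, y)) (ω, (0:ℝ)) r := by
        have := ((hasDerivAt_id r).smul_const ω).prodMk (hasDerivAt_const r y)
        simpa using this
      exact (hd (r • ω, y)).hasFDerivAt.comp_hasDerivAt r h1)
    (by fun_prop)
    (fun r hr0 hr => hR _ _ (by rwa [norm_smul, hω, mul_one, Real.norm_of_nonneg hr0]))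
  refine le_trans (le_of_eq ?_) (key.trans (mul_le_mul_right ?_ _))
  · apply setLIntegral_congr_fun measurableSet_Ioi
    intro r hr
    have hr0 : 0 ≤ r := ha.trans (le_of_lt hr)
    have hn : ‖r • ω‖ = r := by rw [norm_smul, hω, mul_one, Real.norm_of_nonneg hr0]
    simp only [hn]
    congr 1
    ring
  · apply setLIntegral_mono' measurableSet_Ioi
    intro r hr
    have hr' : a < r := hr
    have hr0 : 0 ≤ r := ha.trans (le_of_lt hr)
    have hn : ‖r • ω‖ = r := by rw [norm_smul, hω, mul_one, Real.norm_of_nonneg hr0]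
    apply ENNReal.ofReal_le_ofReal
    rw [hn]
    have hw := Real.rpow_nonneg (show 0 ≤ 2 + r - t by linarith) (β + 2)
    have := grad_bound u (r • ω, y) ω hω
    calc _ ≤ (2 + r - t) ^ (β + 2) * (r ^ 2 * grad2 u (r • ω, y)) := by gcongr
      _ = _ := by ring

lemma grad2_continuous (u : E3 × ℝ → ℝ) (hu : ContDiff ℝ (⊤ : ℕ∞) u) :
    Continuous (grad2 u) := by
  have hc : Continuous (fderiv ℝ u) := hu.continuous_fderiv (by simp)
  unfold grad2
  fun_prop

lemma grad2_nonneg (u : E3 × ℝ → ℝ) (p : E3 × ℝ) : 0 ≤ grad2 u p := by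
  unfold grad2
  positivity

lemma grad2_zero (u : E3 × ℝ → ℝ) (R : ℝ) (hR : ∀ x y, R ≤ ‖x‖ → u (x, y) = 0)
    (p : E3 × ℝ) (hp : R < ‖p.1‖) : grad2 u p = 0 := by
  have h : u =ᶠ[nhds p] fun _ => 0 := by
    have : {q : E3 × ℝ | R < ‖q.1‖} ∈ nhds p :=
      (isOpen_lt continuous_const (by fun_prop)).mem_nhds hp
    filter_upwards [this] with q hq
    exact hR q.1 q.2 (le_of_lt hq)
  have h2 : fderiv ℝ u p = 0 := by
    rw [h.fderiv_eq]
    simp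
  simp [grad2, h2]

/-- Fubini reduction of the slice integral. -/
lemma slice_lintegral (t : ℝ) (G : E3 × ℝ → ENNReal) (hG : Measurable G) :
    ∫⁻ p in slice t, G p = ∫⁻ y in Set.Icc 0 (2 * π), ∫⁻ x,
      {x : E3 | Real.sqrt ((t - 1) ^ 2 - 1) ≤ ‖x‖}.indicator (fun x => G (x, y)) x := by
  have hA : MeasurableSet {x : E3 | Real.sqrt ((t - 1) ^ 2 - 1) ≤ ‖x‖} :=
    measurableSet_le measurable_const measurable_norm
  have hs : slice t = {x : E3 | Real.sqrt ((t - 1) ^ 2 - 1) ≤ ‖x‖} ×ˢ Set.Icc 0 (2 * π) := rfl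
  rw [hs, Measure.volume_eq_prod, ← Measure.prod_restrict, lintegral_prod_symm _ hG.aemeasurable]
  apply lintegral_congr
  intro y
  rw [lintegral_indicator hA]

/-- Weighted Hardy inequality on exterior slices. -/
theorem weighted_hardy_exterior (β : ℝ) (hβ : -1 < β) :
    ∃ C : ℝ, 0 < C ∧ ∀ t : ℝ, 2 ≤ t →
      ∀ u : EuclideanSpace ℝ (Fin 3) × ℝ → ℝ, ContDiff ℝ (⊤ : ℕ∞) u →
        (∀ x y, u (x, y + 2 * π) = u (x, y)) →
        (∃ R : ℝ, ∀ x y, R ≤ ‖x‖ → u (x, y) = 0) →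
        ∫ p in slice t, (2 + ‖p.1‖ - t) ^ β * (u p) ^ 2 ≤
          C * ∫ p in slice t, (2 + ‖p.1‖ - t) ^ (β + 2) * grad2 u p := by
  refine ⟨4 / (β + 1) ^ 2, by have : 0 < β + 1 := by linarith
                              positivity, ?_⟩
  rintro t ht u hu - ⟨R, hR⟩
  set a := Real.sqrt ((t - 1) ^ 2 - 1) with hadef
  have ha : 0 ≤ a := Real.sqrt_nonneg _
  have hat : 0 ≤ 2 + a - t := by
    have : t - 2 ≤ a := Real.le_sqrt_of_sq_le (by nlinarith)
    linarith
  have hA : MeasurableSet {x : E3 | a ≤ ‖x‖} :=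
    measurableSet_le measurable_const measurable_norm
  have hsm : MeasurableSet (slice t) := hA.prod measurableSet_Icc
  have hgc := grad2_continuous u hu
  have huc : Continuous u := hu.continuous
  have hm1 : Measurable (fun p : E3 × ℝ => (2 + ‖p.1‖ - t) ^ β * (u p) ^ 2) :=
    (Measurable.pow_const (by fun_prop) _).mul (huc.measurable.pow_const 2)
  have hc2 : Continuous (fun p : E3 × ℝ => (2 + ‖p.1‖ - t) ^ (β + 2) * grad2 u p) :=
    (Continuous.rpow_const (by fun_prop) (fun _ => Or.inr (by linarith))).mul hgc
  have hw : ∀ γ : ℝ, ∀ p ∈ slice t, 0 ≤ (2 + ‖p.1‖ - t) ^ γ := by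
    intro γ p hp
    have : a ≤ ‖p.1‖ := hp.1
    exact Real.rpow_nonneg (by linarith) _
  have hnn1 : 0 ≤ᵐ[volume.restrict (slice t)]
      fun p : E3 × ℝ => (2 + ‖p.1‖ - t) ^ β * (u p) ^ 2 := by
    filter_upwards [ae_restrict_mem hsm] with p hp
    exact mul_nonneg (hw _ p hp) (sq_nonneg _)
  have hnn2 : 0 ≤ᵐ[volume.restrict (slice t)]
      fun p : E3 × ℝ => (2 + ‖p.1‖ - t) ^ (β + 2) * grad2 u p := by
    filter_upwards [ae_restrict_mem hsm] with p hp
    exact mul_nonneg (hw _ p hp) (grad2_nonneg u p)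
  have hint : IntegrableOn (fun p : E3 × ℝ => (2 + ‖p.1‖ - t) ^ (β + 2) * grad2 u p)
      (slice t) := by
    have hK : IsCompact (Metric.closedBall (0 : E3) R ×ˢ Set.Icc (0 : ℝ) (2 * π)) :=
      (isCompact_closedBall _ _).prod isCompact_Icc
    refine (hc2.continuousOn.integrableOn_compact hK).of_forall_sdiff_eq_zero hsm ?_
    rintro p ⟨hp, hpK⟩
    have : R < ‖p.1‖ := by
      by_contra hcon
      exact hpK ⟨by simpa using hcon, hp.2⟩
    rw [grad2_zero u R hR p this, mul_zero]
  have main : ∫⁻ p in slice t, ENNReal.ofReal ((2 + ‖p.1‖ - t) ^ β * (u p) ^ 2) ≤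
      ENNReal.ofReal (4 / (β + 1) ^ 2) *
        ∫⁻ p in slice t, ENNReal.ofReal ((2 + ‖p.1‖ - t) ^ (β + 2) * grad2 u p) := by
    rw [slice_lintegral t _ hm1.ennreal_ofReal,
      slice_lintegral t _ hc2.measurable.ennreal_ofReal,
      ← lintegral_const_mul' _ _ ENNReal.ofReal_ne_top]
    apply lintegral_mono
    intro y
    have hy : Measurable (fun x : E3 => (x, y)) := by fun_prop
    have m1 : Measurable ({x : E3 | a ≤ ‖x‖}.indicator
        (fun x => ENNReal.ofReal ((2 + ‖x‖ - t) ^ β * u (x, y) ^ 2))) :=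
      (hm1.ennreal_ofReal.comp hy).indicator hA
    have m2 : Measurable ({x : E3 | a ≤ ‖x‖}.indicator
        (fun x => ENNReal.ofReal ((2 + ‖x‖ - t) ^ (β + 2) * grad2 u (x, y)))) :=
      (hc2.measurable.ennreal_ofReal.comp hy).indicator hA
    simp only [← hadef]
    rw [lintegral_polar _ m1, lintegral_polar _ m2,
      ← lintegral_const_mul' _ _ ENNReal.ofReal_ne_top]
    apply lintegral_mono
    intro ω
    exact hardy_ray β hβ a R t ha hat u hu hR y ω (by simp)
  rw [integral_eq_lintegral_of_nonneg_ae hnn1 hm1.aestronglyMeasurable,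
    integral_eq_lintegral_of_nonneg_ae hnn2 hc2.measurable.aestronglyMeasurable]
  have hfin : ∫⁻ p in slice t, ENNReal.ofReal ((2 + ‖p.1‖ - t) ^ (β + 2) * grad2 u p) ≠ ⊤ := by
    rw [← ofReal_integral_eq_lintegral_ofReal hint hnn2]
    exact ENNReal.ofReal_ne_top
  have := ENNReal.toReal_mono (ENNReal.mul_ne_top ENNReal.ofReal_ne_top hfin) main
  rwa [ENNReal.toReal_mul, ENNReal.toReal_ofReal (by positivity)] at this

end Stmt3
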